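/- arXiv:2309.03515 — 7 statements merged into one kernel-verified Lean document; each statement's English description precedes it below -/
import Mathlib

section
/- Let n ≥ 2, a ∈ 𝔹ⁿ \ {0}, and let A : ℝⁿ → ℝⁿ be a linear isometry (orthogonal transformation). Let f = A ∘ σ_a (which is a Möbius transformation of 𝔹ⁿ onto 𝔹ⁿ with f(a) = 0). Then for all x, y ∈ 𝔹ⁿ and all c > 0: (1/(1+|a|))·h_{𝔹ⁿ,c}(x, y) ≤ h_{𝔹ⁿ,c}(f(x), f(y)) ≤ (1+|a|)·h_{𝔹ⁿ,c}(x, y). -/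
noncomputable section

open Real Filter

/-- The hyperbolic-type metric `h_{𝔹ⁿ,c}` on the unit ball. -/
def hB {n : ℕ} (c : ℝ) (x y : EuclideanSpace ℝ (Fin n)) : ℝ :=
  Real.log (1 + c * ‖x - y‖ / Real.sqrt ((1 - ‖x‖) * (1 - ‖y‖)))

/-- The n-th (last) coordinate of a point of `ℝⁿ`. -/
def lastCoord {n : ℕ} (x : EuclideanSpace ℝ (Fin n)) : ℝ :=
  if h : 0 < n then x ⟨n - 1, Nat.sub_lt h one_pos⟩ else 0

/-- The hyperbolic-type metric `h_{ℍⁿ,c}` on the upper half space. -/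
def hH {n : ℕ} (c : ℝ) (x y : EuclideanSpace ℝ (Fin n)) : ℝ :=
  Real.log (1 + c * ‖x - y‖ / Real.sqrt (lastCoord x * lastCoord y))

/-- The hyperbolic-type metric `h_{𝔹ⁿ\{p},c}` on the punctured unit ball. -/
def hP {n : ℕ} (c : ℝ) (p x y : EuclideanSpace ℝ (Fin n)) : ℝ :=
  Real.log (1 + c * ‖x - y‖ /
    Real.sqrt (min ‖x - p‖ (1 - ‖x‖) * min ‖y - p‖ (1 - ‖y‖)))

/-- The inversion `σ_a` in the sphere `S^{n-1}(a*, r)`, `a* = a/|a|²`, `r² = 1/|a|² - 1`. -/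
def sigmaInv {n : ℕ} (a x : EuclideanSpace ℝ (Fin n)) : EuclideanSpace ℝ (Fin n) :=
  (‖a‖ ^ 2)⁻¹ • a +
    (((‖a‖ ^ 2)⁻¹ - 1) / ‖x - (‖a‖ ^ 2)⁻¹ • a‖ ^ 2) • (x - (‖a‖ ^ 2)⁻¹ • a)

/-- The last standard basis vector `eₙ` of `ℝⁿ`. -/
def eLast (n : ℕ) : EuclideanSpace ℝ (Fin n) :=
  if h : 0 < n then EuclideanSpace.single ⟨n - 1, Nat.sub_lt h one_pos⟩ 1 else 0

/-- The first standard basis vector `e₁` of `ℝⁿ`. -/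
def eFirst (n : ℕ) : EuclideanSpace ℝ (Fin n) :=
  if h : 0 < n then EuclideanSpace.single ⟨0, h⟩ 1 else 0

/-- The inversion `σ` in the sphere `S^{n-1}(-eₙ, √2)`, mapping `𝔹ⁿ` onto `ℍⁿ`. -/
def sigmaBH {n : ℕ} (x : EuclideanSpace ℝ (Fin n)) : EuclideanSpace ℝ (Fin n) :=
  -eLast n + (2 / ‖x + eLast n‖ ^ 2) • (x + eLast n)


lemma le_of_sq_le_sq_aux {x y : ℝ} (h : x ^ 2 ≤ y ^ 2) (hy : 0 ≤ y) : x ≤ y :=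
  abs_le_of_sq_le_sq' h hy |>.2

lemma aux_log (K c d d' u1 u2 v1 v2 : ℝ) (hK : 1 ≤ K) (hc : 0 < c) (hd : 0 ≤ d) (hd' : 0 ≤ d')
    (hu1 : 0 ≤ u1) (hu2 : 0 ≤ u2) (hv1 : 0 ≤ v1) (hv2 : 0 ≤ v2)
    (hu1' : u1 < 1) (hu2' : u2 < 1) (hv1' : v1 < 1) (hv2' : v2 < 1)
    (h1 : 1 + v1 ≤ K * (1 + u1)) (h2 : 1 + v2 ≤ K * (1 + u2))
    (hE : d' ^ 2 * ((1 - u1 ^ 2) * (1 - u2 ^ 2)) = d ^ 2 * ((1 - v1 ^ 2) * (1 - v2 ^ 2))) :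
    Real.log (1 + c * d' / √((1 - v1) * (1 - v2))) ≤
      K * Real.log (1 + c * d / √((1 - u1) * (1 - u2))) := by
  have pu : 0 < (1 - u1) * (1 - u2) := mul_pos (by linarith) (by linarith)
  have pv : 0 < (1 - v1) * (1 - v2) := mul_pos (by linarith) (by linarith)
  have hpu : 0 < (1 + u1) * (1 + u2) := by positivity
  have su := Real.sqrt_pos.2 pu
  have sv := Real.sqrt_pos.2 pv
  have hprod : (1 + v1) * (1 + v2) ≤ K ^ 2 * ((1 + u1) * (1 + u2)) := by
    calc (1 + v1) * (1 + v2) ≤ (K * (1 + u1)) * (K * (1 + u2)) := by gcongr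
      _ = _ := by ring
  have hsq : d' ^ 2 * ((1 - u1) * (1 - u2)) ≤ K ^ 2 * d ^ 2 * ((1 - v1) * (1 - v2)) := by
    refine le_of_mul_le_mul_right ?_ hpu
    calc _ = d' ^ 2 * ((1 - u1 ^ 2) * (1 - u2 ^ 2)) := by ring
      _ = (d ^ 2 * ((1 - v1) * (1 - v2))) * ((1 + v1) * (1 + v2)) := by rw [hE]; ring
      _ ≤ (d ^ 2 * ((1 - v1) * (1 - v2))) * (K ^ 2 * ((1 + u1) * (1 + u2))) := by gcongr
      _ = _ := by ring
  have hlin : d' * √((1 - u1) * (1 - u2)) ≤ K * d * √((1 - v1) * (1 - v2)) := by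
    refine le_of_sq_le_sq_aux ?_ (by positivity)
    rw [mul_pow, mul_pow, Real.sq_sqrt pu.le, Real.sq_sqrt pv.le, mul_pow]
    exact hsq
  have hdiv : c * d' / √((1 - v1) * (1 - v2)) ≤ K * (c * d / √((1 - u1) * (1 - u2))) := by
    rw [← mul_div_assoc, div_le_div_iff₀ sv su]
    nlinarith [mul_le_mul_of_nonneg_left hlin hc.le]
  have ht : 0 ≤ c * d / √((1 - u1) * (1 - u2)) := by positivity
  have hB := one_add_mul_self_le_rpow_one_add (s := c * d / √((1 - u1) * (1 - u2)))
    (by linarith) hK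
  rw [← Real.log_rpow (by positivity)]
  apply Real.log_le_log (by positivity)
  linarith

lemma aux_real (s u v p Z : ℝ) (hs0 : 0 < s) (hs1 : s < 1) (hu0 : 0 ≤ u) (hu1 : u < 1)
    (hv0 : 0 ≤ v) (hp1 : p ≤ s * u) (hp2 : - (s * u) ≤ p) (hZ : 0 < Z)
    (hD : s ^ 2 * Z = 1 - 2 * p + s ^ 2 * u ^ 2)
    (hv : 1 - v ^ 2 = ((s ^ 2)⁻¹ - 1) * (1 - u ^ 2) / Z) :
    v < 1 ∧ v ≤ s + u ∧ u ≤ s + v := by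
  have hvD : v ^ 2 * (s ^ 2 * Z) = u ^ 2 - 2 * p + s ^ 2 := by
    have : (1 - v ^ 2) * (s ^ 2 * Z) = (1 - s ^ 2) * (1 - u ^ 2) := by
      rw [hv]; field_simp
    linarith
  have hDp : 0 < s ^ 2 * Z := by positivity
  have hs2 : 0 < 1 - s ^ 2 := by nlinarith
  have hu2 : 0 < 1 - u ^ 2 := by nlinarith
  have hv1 : v < 1 := by
    by_contra h
    push Not at h
    have h1 : 1 ≤ v ^ 2 := by nlinarith
    nlinarith [mul_pos hs2 hu2, mul_le_mul_of_nonneg_right h1 hDp.le]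
  refine ⟨hv1, ?_, ?_⟩
  · rcases le_total 1 (s + u) with h | h
    · linarith
    · refine le_of_sq_le_sq_aux ?_ (by positivity)
      refine le_of_mul_le_mul_right ?_ hDp
      rw [hvD, hD]
      have hw : 0 ≤ 1 - (s + u) ^ 2 := by nlinarith
      have := mul_nonneg hw (by linarith : 0 ≤ s * u + p)
      have : 0 ≤ (s + u) ^ 2 * (2 * (s * u) + s ^ 2 * u ^ 2) := by positivity
      nlinarith
  · rcases le_total u s with h | h
    · linarith
    · have : u - s ≤ v := by
        refine le_of_sq_le_sq_aux ?_ hv0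
        refine le_of_mul_le_mul_right ?_ hDp
        rw [hvD, hD]
        have hw : 0 ≤ 1 - (u - s) ^ 2 := by nlinarith
        have h1 := mul_nonneg hw (by linarith : 0 ≤ s * u - p)
        have hsu : 0 ≤ s * u := by positivity
        have hsu1 : s * u ≤ 1 := by nlinarith
        have h2 : 0 ≤ (u - s) ^ 2 * (s * u * (2 - s * u)) :=
          mul_nonneg (sq_nonneg _) (mul_nonneg hsu (by linarith))
        nlinarith
      linarith

lemma aux_norm {n : ℕ} (a x : EuclideanSpace ℝ (Fin n)) (haB : ‖a‖ < 1) (ha0 : a ≠ 0)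
    (hx : ‖x‖ < 1) :
    x - (‖a‖ ^ 2)⁻¹ • a ≠ 0 ∧
    1 - ‖sigmaInv a x‖ ^ 2 =
      ((‖a‖ ^ 2)⁻¹ - 1) * (1 - ‖x‖ ^ 2) / ‖x - (‖a‖ ^ 2)⁻¹ • a‖ ^ 2 ∧
    ‖sigmaInv a x‖ < 1 ∧ ‖sigmaInv a x‖ ≤ ‖a‖ + ‖x‖ ∧ ‖x‖ ≤ ‖a‖ + ‖sigmaInv a x‖ := by
  have hs : 0 < ‖a‖ := norm_pos_iff.2 ha0
  have hb : ‖(‖a‖ ^ 2)⁻¹ • a‖ ^ 2 = (‖a‖ ^ 2)⁻¹ := by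
    rw [norm_smul, mul_pow, Real.norm_of_nonneg (by positivity)]
    field_simp
  have hz : x - (‖a‖ ^ 2)⁻¹ • a ≠ 0 := by
    intro h
    rw [sub_eq_zero] at h
    rw [← h] at hb
    have h1 : 1 ≤ (‖a‖ ^ 2)⁻¹ := (one_le_inv₀ (by positivity)).2 (by nlinarith)
    nlinarith [norm_nonneg x]
  have hZ : 0 < ‖x - (‖a‖ ^ 2)⁻¹ • a‖ ^ 2 := by positivity
  have key : 1 - ‖sigmaInv a x‖ ^ 2 =
      ((‖a‖ ^ 2)⁻¹ - 1) * (1 - ‖x‖ ^ 2) / ‖x - (‖a‖ ^ 2)⁻¹ • a‖ ^ 2 := by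
    have hxz : ‖x‖ ^ 2 = ‖(‖a‖ ^ 2)⁻¹ • a + (x - (‖a‖ ^ 2)⁻¹ • a)‖ ^ 2 := by
      congr 2; abel
    unfold sigmaInv
    rw [norm_add_sq_real, hb] at *
    generalize x - (‖a‖ ^ 2)⁻¹ • a = z at *
    rw [hxz, inner_smul_right, norm_smul, mul_pow, Real.norm_eq_abs, sq_abs]
    generalize (‖a‖ ^ 2)⁻¹ = B at *
    field_simp
    ring
  have hp := abs_le.1 (abs_real_inner_le_norm a x)
  refine ⟨hz, key, aux_real ‖a‖ ‖x‖ ‖sigmaInv a x‖ (inner ℝ a x) _ hs haB (norm_nonneg _) hx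
    (norm_nonneg _) hp.2 hp.1 hZ ?_ key⟩
  rw [norm_sub_sq_real, hb, inner_smul_right, real_inner_comm]
  field_simp
  ring

lemma aux_dist {n : ℕ} (a x y : EuclideanSpace ℝ (Fin n)) (haB : ‖a‖ < 1) (ha0 : a ≠ 0)
    (hx : x - (‖a‖ ^ 2)⁻¹ • a ≠ 0) (hy : y - (‖a‖ ^ 2)⁻¹ • a ≠ 0) :
    ‖sigmaInv a x - sigmaInv a y‖ = ((‖a‖ ^ 2)⁻¹ - 1) /
      (‖x - (‖a‖ ^ 2)⁻¹ • a‖ * ‖y - (‖a‖ ^ 2)⁻¹ • a‖) * ‖x - y‖ := by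
  have hs : 0 < ‖a‖ := norm_pos_iff.2 ha0
  have hR : 0 ≤ (‖a‖ ^ 2)⁻¹ - 1 := by
    have h1 : 1 ≤ (‖a‖ ^ 2)⁻¹ := (one_le_inv₀ (by positivity)).2 (by nlinarith)
    linarith
  have h := dist_div_norm_sq_smul hx hy (√((‖a‖ ^ 2)⁻¹ - 1))
  rw [div_pow, div_pow, Real.sq_sqrt hR, dist_eq_norm, dist_eq_norm, sub_sub_sub_cancel_right] at h
  rw [← h]
  unfold sigmaInv
  rw [add_sub_add_left_eq_sub]

theorem mobius_ball_lipschitz (n : ℕ) (hn : 2 ≤ n)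
    (a : EuclideanSpace ℝ (Fin n)) (haB : ‖a‖ < 1) (ha0 : a ≠ 0)
    (A : EuclideanSpace ℝ (Fin n) →ₗᵢ[ℝ] EuclideanSpace ℝ (Fin n))
    (f : EuclideanSpace ℝ (Fin n) → EuclideanSpace ℝ (Fin n))
    (hf : ∀ x, f x = A (sigmaInv a x))
    (x y : EuclideanSpace ℝ (Fin n)) (hx : ‖x‖ < 1) (hy : ‖y‖ < 1)
    (c : ℝ) (hc : 0 < c) :
    (1 / (1 + ‖a‖)) * hB c x y ≤ hB c (f x) (f y) ∧
      hB c (f x) (f y) ≤ (1 + ‖a‖) * hB c x y := by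
  obtain ⟨hzx, kx, vx1, vx2, vx3⟩ := aux_norm a x haB ha0 hx
  obtain ⟨hzy, ky, vy1, vy2, vy3⟩ := aux_norm a y haB ha0 hy
  have hd := aux_dist a x y haB ha0 hzx hzy
  have hs : 0 < ‖a‖ := norm_pos_iff.2 ha0
  have hE : ‖sigmaInv a x - sigmaInv a y‖ ^ 2 * ((1 - ‖x‖ ^ 2) * (1 - ‖y‖ ^ 2)) =
      ‖x - y‖ ^ 2 * ((1 - ‖sigmaInv a x‖ ^ 2) * (1 - ‖sigmaInv a y‖ ^ 2)) := by
    rw [kx, ky, hd]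
    have h1 := norm_pos_iff.2 hzx
    have h2 := norm_pos_iff.2 hzy
    generalize (‖a‖ ^ 2)⁻¹ - 1 = R
    field_simp
  have nx := norm_nonneg x
  have ny := norm_nonneg y
  have nsx := norm_nonneg (sigmaInv a x)
  have nsy := norm_nonneg (sigmaInv a y)
  unfold hB
  rw [hf, hf, ← map_sub, A.norm_map, A.norm_map, A.norm_map]
  constructor
  · rw [one_div, inv_mul_le_iff₀ (by linarith)]
    exact aux_log (1 + ‖a‖) c _ _ _ _ _ _ (by linarith) hc (norm_nonneg _) (norm_nonneg _)
      nsx nsy nx ny vx1 vy1 hx hy (by nlinarith) (by nlinarith) hE.symm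
  · exact aux_log (1 + ‖a‖) c _ _ _ _ _ _ (by linarith) hc (norm_nonneg _) (norm_nonneg _)
      nx ny nsx nsy hx hy vx1 vy1 (by nlinarith) (by nlinarith) hE
end
end

section
/- Let n ≥ 2, a ∈ 𝔹ⁿ \ {0}, c > 0. For t ∈ (0, |a|) put x_t = t·a/|a| and y_t = −x_t. Then lim_{t→0⁺} h_{𝔹ⁿ,c}(σ_a(x_t), σ_a(y_t)) / h_{𝔹ⁿ,c}(x_t, y_t) = 1 + |a|. Consequently, the constant 1 + |a| in the Lipschitz bound h_{𝔹ⁿ,c}(σ_a(x), σ_a(y)) ≤ (1+|a|)·h_{𝔹ⁿ,c}(x, y) is best possible. -/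
noncomputable section

open Real Filter

/-- First-order behaviour of `log (1 + t g(t))` at `0`. -/
theorem log_aux (g : ℝ → ℝ) (hg : ContinuousAt g 0) :
    Tendsto (fun t : ℝ => Real.log (1 + t * g t) / t) (nhdsWithin 0 {0}ᶜ) (nhds (g 0)) := by
  have h1 : HasDerivAt (fun t : ℝ => t * g t) (g 0) 0 := by
    rw [hasDerivAt_iff_tendsto_slope]
    refine (hg.tendsto.mono_left nhdsWithin_le_nhds).congr' ?_
    filter_upwards [self_mem_nhdsWithin] with t ht
    have ht' : t ≠ 0 := ht
    simp [slope_def_field, ht']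
  have h2 : HasDerivAt (fun t : ℝ => Real.log (1 + t * g t)) (g 0) 0 := by
    have := (h1.const_add 1).log (by simp)
    simpa using this
  rw [hasDerivAt_iff_tendsto_slope] at h2
  refine h2.congr fun t => ?_
  simp [slope_def_field]

/-- The inversion on the line through `a`. -/
theorem sigmaInv_line {n : ℕ} (a : EuclideanSpace ℝ (Fin n)) (haB : ‖a‖ < 1) (ha0 : a ≠ 0)
    (s : ℝ) (hs : s < 1) :
    sigmaInv a ((s / ‖a‖) • a) = (((‖a‖ - s) / (1 - s * ‖a‖)) / ‖a‖) • a := by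
  have hA : 0 < ‖a‖ := norm_pos_iff.mpr ha0
  have hp : 0 < 1 - s * ‖a‖ := by nlinarith
  have hp1 : 1 - s * ‖a‖ ≠ 0 := hp.ne'
  have hp2 : 1 - ‖a‖ * s ≠ 0 := by rwa [mul_comm]
  unfold sigmaInv
  rw [← sub_smul, norm_smul, mul_pow, Real.norm_eq_abs, sq_abs, smul_smul, ← add_smul]
  congr 1
  have h3 : s / ‖a‖ - (‖a‖ ^ 2)⁻¹ = -(1 - s * ‖a‖) / ‖a‖ ^ 2 := by
    field_simp
    ring
  rw [h3]
  generalize ‖a‖ = A at *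
  field_simp
  ring

theorem norm_line {n : ℕ} (a : EuclideanSpace ℝ (Fin n)) (ha0 : a ≠ 0) (s : ℝ) :
    ‖(s / ‖a‖) • a‖ = |s| := by
  have hA : 0 < ‖a‖ := norm_pos_iff.mpr ha0
  rw [norm_smul, Real.norm_eq_abs, abs_div, abs_of_pos hA]
  field_simp

/-- `hB` on the line through `a`. -/
theorem hB_line {n : ℕ} (a : EuclideanSpace ℝ (Fin n)) (ha0 : a ≠ 0) (c u v : ℝ) :
    hB c ((u / ‖a‖) • a) ((v / ‖a‖) • a) =
      Real.log (1 + c * |u - v| / Real.sqrt ((1 - |u|) * (1 - |v|))) := by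
  unfold hB
  rw [← sub_smul, ← sub_div, norm_line a ha0, norm_line a ha0, norm_line a ha0]

theorem mobius_ball_constant_sharp (n : ℕ) (hn : 2 ≤ n)
    (a : EuclideanSpace ℝ (Fin n)) (haB : ‖a‖ < 1) (ha0 : a ≠ 0)
    (c : ℝ) (hc : 0 < c) :
    Filter.Tendsto
      (fun t : ℝ =>
        hB c (sigmaInv a ((t / ‖a‖) • a)) (sigmaInv a (-((t / ‖a‖) • a))) /
          hB c ((t / ‖a‖) • a) (-((t / ‖a‖) • a)))
      (nhdsWithin 0 (Set.Ioo 0 ‖a‖)) (nhds (1 + ‖a‖)) := by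
  have hA : 0 < ‖a‖ := norm_pos_iff.mpr ha0
  have e1 := fun t (ht : t < 1) => sigmaInv_line a haB ha0 t ht
  have e2 := hB_line a ha0 c
  generalize hAe : ‖a‖ = A at *
  have hA1 : 0 < 1 - A := by linarith
  set g1 : ℝ → ℝ := fun t => c * (2 * (1 - A ^ 2) / ((1 - t * A) * (1 + t * A))) /
    Real.sqrt (((1 - A) * (1 + t) / (1 - t * A)) * ((1 - A) * (1 - t) / (1 + t * A))) with hg1
  set g2 : ℝ → ℝ := fun t => c * 2 / Real.sqrt ((1 - t) * (1 - t)) with hg2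
  have c1 : ContinuousAt g1 0 := by
    have : Real.sqrt (((1 - A) * (1 + 0) / (1 - 0 * A)) * ((1 - A) * (1 - 0) / (1 + 0 * A))) ≠ 0 := by
      simp only [zero_mul, add_zero, sub_zero, mul_one, div_one]
      rw [Real.sqrt_mul_self hA1.le]
      exact hA1.ne'
    rw [hg1]
    fun_prop (disch := first | assumption | simp)
  have c2 : ContinuousAt g2 0 := by
    rw [hg2]
    fun_prop (disch := simp)
  have v1 : g1 0 = 2 * c * (1 + A) := by
    simp only [hg1]
    simp [Real.sqrt_mul_self hA1.le]
    field_simp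
    ring
  have v2 : g2 0 = 2 * c := by
    simp [hg2]; ring
  have hsub : nhdsWithin (0 : ℝ) (Set.Ioo 0 A) ≤ nhdsWithin 0 {0}ᶜ :=
    nhdsWithin_mono _ fun t ht => ht.1.ne'
  have T := ((log_aux g1 c1).div (log_aux g2 c2) (by rw [v2]; positivity)).mono_left hsub
  have hv : g1 0 / g2 0 = 1 + A := by
    rw [v1, v2]; field_simp
  rw [hv] at T
  refine T.congr' ?_
  filter_upwards [self_mem_nhdsWithin] with t ht
  obtain ⟨ht0, htA⟩ := ht
  have p1 : 0 < 1 - t * A := by nlinarith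
  have p2 : 0 < 1 + t * A := by positivity
  have p3 : 1 - t * A ≠ 0 := p1.ne'
  have p4 : 1 - A * t ≠ 0 := by rwa [mul_comm]
  have en : -((t / A) • a) = ((-t) / A) • a := by rw [neg_div, neg_smul]
  have q1 : |(A - t) / (1 - t * A)| = (A - t) / (1 - t * A) :=
    abs_of_nonneg (div_nonneg (by linarith) p1.le)
  have q2 : |(A - -t) / (1 - -t * A)| = (A + t) / (1 + t * A) := by
    rw [sub_neg_eq_add, neg_mul, sub_neg_eq_add]
    exact abs_of_nonneg (div_nonneg (by linarith) p2.le)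
  have q3 : |(A - t) / (1 - t * A) - (A - -t) / (1 - -t * A)| =
      t * (2 * (1 - A ^ 2) / ((1 - t * A) * (1 + t * A))) := by
    have : (A - t) / (1 - t * A) - (A - -t) / (1 - -t * A) =
      -(t * (2 * (1 - A ^ 2) / ((1 - t * A) * (1 + t * A)))) := by
      rw [sub_neg_eq_add, neg_mul, sub_neg_eq_add]
      field_simp
      ring
    rw [this, abs_neg]
    refine abs_of_nonneg ?_
    have : 0 < 1 - A ^ 2 := by nlinarith
    positivity
  have r1 : 1 - (A - t) / (1 - t * A) = (1 - A) * (1 + t) / (1 - t * A) := by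
    field_simp
    ring
  have r2 : 1 - (A + t) / (1 + t * A) = (1 - A) * (1 - t) / (1 + t * A) := by
    field_simp
    ring
  rw [en, e1 t (by linarith), e1 (-t) (by linarith), e2, e2, q1, q2, q3, r1, r2, abs_neg,
    abs_of_pos ht0, sub_neg_eq_add, abs_of_pos (by linarith : 0 < t + t)]
  simp only [Pi.div_apply]
  rw [div_div_div_cancel_right₀ ht0.ne']
  simp only [hg1, hg2]
  congr 3 <;> ring
end
end

section
/- Let n ≥ 2 and let σ(x) = −eₙ + 2(x + eₙ)/|x + eₙ|² be the inversion in the sphere S^{n−1}(−eₙ, √2), which maps 𝔹ⁿ onto ℍⁿ with σ(0) = eₙ. Then for all x, y ∈ 𝔹ⁿ and all c > 0: h_{ℍⁿ,c}(σ(x), σ(y)) = log(1 + 2c·|x − y|/√((1 − |x|²)(1 − |y|²))). -/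
noncomputable section

open Real Filter

theorem lastCoord_sigmaBH_aux {n : ℕ} (hn : 0 < n)
    (x : EuclideanSpace ℝ (Fin n)) (hx : ‖x‖ < 1) :
    0 < ‖x + eLast n‖ ∧ lastCoord (sigmaBH x) = (1 - ‖x‖ ^ 2) / ‖x + eLast n‖ ^ 2 := by
  have he : ‖eLast n‖ = 1 := by simp [eLast, hn]
  have hpos : 0 < ‖x + eLast n‖ := by
    have h := norm_sub_norm_le (eLast n) (-x)
    rw [sub_neg_eq_add, norm_neg, he, add_comm (eLast n) x] at h
    linarith
  refine ⟨hpos, ?_⟩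
  have hin : inner ℝ x (eLast n) = lastCoord x := by
    simp [eLast, lastCoord, hn, EuclideanSpace.inner_single_right]
  have hsq := norm_add_sq_real x (eLast n)
  rw [hin, he] at hsq
  have hl : lastCoord (sigmaBH x) = -1 + 2 / ‖x + eLast n‖ ^ 2 * (lastCoord x + 1) := by
    simp only [lastCoord, sigmaBH, hn, dif_pos, PiLp.add_apply, PiLp.neg_apply,
      PiLp.smul_apply, smul_eq_mul]
    have h1 : (eLast n) ⟨n - 1, Nat.sub_lt hn one_pos⟩ = 1 := by simp [eLast, hn]
    rw [h1]
  rw [hl]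
  field_simp
  linarith

theorem hH_sigmaBH_formula (n : ℕ) (hn : 2 ≤ n)
    (x y : EuclideanSpace ℝ (Fin n)) (hx : ‖x‖ < 1) (hy : ‖y‖ < 1)
    (c : ℝ) (hc : 0 < c) :
    hH c (sigmaBH x) (sigmaBH y) =
      Real.log (1 + 2 * c * ‖x - y‖ / Real.sqrt ((1 - ‖x‖ ^ 2) * (1 - ‖y‖ ^ 2))) := by
  obtain ⟨hu, hlx⟩ := lastCoord_sigmaBH_aux (by omega : 0 < n) x hx
  obtain ⟨hv, hly⟩ := lastCoord_sigmaBH_aux (by omega : 0 < n) y hy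
  have hd : ‖sigmaBH x - sigmaBH y‖ = 2 * ‖x - y‖ / (‖x + eLast n‖ * ‖y + eLast n‖) := by
    have h := dist_div_norm_sq_smul (norm_pos_iff.mp hu) (norm_pos_iff.mp hv) (√2)
    rw [dist_eq_norm, dist_eq_norm, add_sub_add_right_eq_sub, div_pow, div_pow,
      Real.sq_sqrt (by norm_num : (0:ℝ) ≤ 2)] at h
    rw [sigmaBH, sigmaBH, add_sub_add_left_eq_sub, h]
    ring
  have hx2 : 0 < 1 - ‖x‖ ^ 2 := by nlinarith [norm_nonneg x]
  have hy2 : 0 < 1 - ‖y‖ ^ 2 := by nlinarith [norm_nonneg y]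
  have hs : √((1 - ‖x‖ ^ 2) / ‖x + eLast n‖ ^ 2 * ((1 - ‖y‖ ^ 2) / ‖y + eLast n‖ ^ 2)) =
      √((1 - ‖x‖ ^ 2) * (1 - ‖y‖ ^ 2)) / (‖x + eLast n‖ * ‖y + eLast n‖) := by
    rw [div_mul_div_comm, ← mul_pow, Real.sqrt_div (by positivity),
      Real.sqrt_sq (by positivity)]
  have hs0 : 0 < √((1 - ‖x‖ ^ 2) * (1 - ‖y‖ ^ 2)) := Real.sqrt_pos.mpr (by positivity)
  rw [hH, hlx, hly, hd, hs]
  congr 2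
  field_simp
end
end

section
/- Let n ≥ 2, c > 0, and let σ(x) = −eₙ + 2(x + eₙ)/|x + eₙ|² be the inversion in the sphere S^{n−1}(−eₙ, √2). For t ∈ (0,1) put x_t = t·e₁ and y_t = −t·e₁. Then lim_{t→0⁺} h_{ℍⁿ,c}(σ(x_t), σ(y_t)) / h_{𝔹ⁿ,c}(x_t, y_t) = 2. Consequently, the constant 2 in the bound h_{ℍⁿ,c}(σ(x), σ(y)) ≤ 2·h_{𝔹ⁿ,c}(x, y) is best possible. -/
noncomputable section

open Real Filter

theorem sigma_diff_aux (n : ℕ) (hn : 2 ≤ n) (t : ℝ) :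
    ‖t • eFirst n + eLast n‖ ^ 2 = 1 + t ^ 2 := by
  have h0 : 0 < n := by omega
  have hne : (⟨0, h0⟩ : Fin n) ≠ ⟨n - 1, Nat.sub_lt h0 one_pos⟩ := by
    intro h
    have := congrArg Fin.val h
    simp at this
    omega
  simp only [eFirst, eLast, h0, dif_pos]
  rw [norm_add_sq_real, norm_smul, real_inner_smul_left]
  simp [EuclideanSpace.inner_single_left, hne, hne.symm]
  ring

theorem norm_eFirst_aux (n : ℕ) (hn : 2 ≤ n) : ‖eFirst n‖ = 1 := by
  have h0 : 0 < n := by omega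
  simp [eFirst, h0]

theorem sigma_aux (n : ℕ) (hn : 2 ≤ n) (t : ℝ) :
    sigmaBH (t • eFirst n) = -eLast n + (2 / (1 + t ^ 2)) • (t • eFirst n + eLast n) := by
  rw [sigmaBH, sigma_diff_aux n hn]

theorem lastCoord_aux (n : ℕ) (hn : 2 ≤ n) (t : ℝ) :
    lastCoord (sigmaBH (t • eFirst n)) = (1 - t ^ 2) / (1 + t ^ 2) := by
  have h0 : 0 < n := by omega
  have hne : (⟨0, h0⟩ : Fin n) ≠ ⟨n - 1, Nat.sub_lt h0 one_pos⟩ := by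
    intro h
    have := congrArg Fin.val h
    simp at this
    omega
  rw [sigma_aux n hn]
  simp only [lastCoord, eFirst, eLast, h0, dif_pos]
  have : (1 + t ^ 2) ≠ 0 := by positivity
  simp [hne, hne.symm]
  field_simp
  ring

theorem hH_aux (n : ℕ) (hn : 2 ≤ n) (c t : ℝ) (ht : 0 < t) (ht1 : t < 1) :
    hH c (sigmaBH (t • eFirst n)) (sigmaBH (-(t • eFirst n))) =
      Real.log (1 + 4 * c * t / (1 - t ^ 2)) := by
  have hp : 0 < 1 + t ^ 2 := by positivity
  have hm : 0 < 1 - t ^ 2 := by nlinarith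
  rw [← neg_smul, hH, lastCoord_aux n hn, lastCoord_aux n hn, neg_sq,
    Real.sqrt_mul_self (by positivity), sigma_aux n hn, sigma_aux n hn, neg_sq]
  have : (-eLast n + (2 / (1 + t ^ 2)) • (t • eFirst n + eLast n)) -
      (-eLast n + (2 / (1 + t ^ 2)) • ((-t) • eFirst n + eLast n)) =
      (4 * t / (1 + t ^ 2)) • eFirst n := by
    module
  rw [this, norm_smul, norm_eFirst_aux n hn, Real.norm_of_nonneg (by positivity)]
  congr 2
  field_simp

theorem hB_aux (n : ℕ) (hn : 2 ≤ n) (c t : ℝ) (ht : 0 < t) (ht1 : t < 1) :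
    hB c (t • eFirst n) (-(t • eFirst n)) = Real.log (1 + 2 * c * t / (1 - t)) := by
  have hm : 0 < 1 - t := by linarith
  have : t • eFirst n - -(t • eFirst n) = (2 * t) • eFirst n := by module
  rw [hB, this, norm_neg, norm_smul, norm_smul, norm_eFirst_aux n hn,
    Real.norm_of_nonneg (by positivity), Real.norm_of_nonneg ht.le, mul_one, mul_one,
    Real.sqrt_mul_self hm.le]
  congr 2
  ring

theorem ball_to_halfspace_constant_two_sharp (n : ℕ) (hn : 2 ≤ n)
    (c : ℝ) (hc : 0 < c) :
    Filter.Tendsto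
      (fun t : ℝ =>
        hH c (sigmaBH (t • eFirst n)) (sigmaBH (-(t • eFirst n))) /
          hB c (t • eFirst n) (-(t • eFirst n)))
      (nhdsWithin 0 (Set.Ioo (0 : ℝ) 1)) (nhds 2) := by
  have hf : HasDerivAt (fun t : ℝ => Real.log (1 + 4 * c * t / (1 - t ^ 2))) (4 * c) 0 := by
    have h1 : HasDerivAt (fun t : ℝ => 1 + 4 * c * t / (1 - t ^ 2)) (4 * c) 0 := by
      have := ((((hasDerivAt_id (0 : ℝ)).const_mul (4 * c)).div
        (((hasDerivAt_id (0 : ℝ)).pow 2).const_sub 1) (by simp)).const_add 1)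
      exact HasDerivAt.congr_deriv this (by simp)
    simpa using h1.log (by simp)
  have hg : HasDerivAt (fun t : ℝ => Real.log (1 + 2 * c * t / (1 - t))) (2 * c) 0 := by
    have h1 : HasDerivAt (fun t : ℝ => 1 + 2 * c * t / (1 - t)) (2 * c) 0 := by
      have := ((((hasDerivAt_id (0 : ℝ)).const_mul (2 * c)).div
        ((hasDerivAt_id (0 : ℝ)).const_sub 1) (by simp)).const_add 1)
      exact HasDerivAt.congr_deriv this (by simp)
    simpa using h1.log (by simp)
  have hle : nhdsWithin (0 : ℝ) (Set.Ioo (0 : ℝ) 1) ≤ nhdsWithin 0 {0}ᶜ :=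
    nhdsWithin_mono _ (fun t ht => ht.1.ne')
  have h := (hf.tendsto_slope.mono_left hle).div (hg.tendsto_slope.mono_left hle)
    (by positivity)
  have h2 : 4 * c / (2 * c) = 2 := by field_simp; norm_num
  rw [h2] at h
  refine h.congr' ?_
  filter_upwards [self_mem_nhdsWithin] with t ht
  have ht0 := ht.1.ne'
  rw [hH_aux n hn c t ht.1 ht.2, hB_aux n hn c t ht.1 ht.2]
  simp only [slope_def_field, Pi.div_apply]
  simp
  rw [div_div_div_cancel_right₀ ht0]
end
end

section
/- Let n ≥ 1 and let σ(x) = x/|x|² be the inversion in the unit sphere S^{n−1}(0,1), which maps ℍⁿ onto ℍⁿ. Then for all x, y ∈ ℍⁿ and all c > 0: h_{ℍⁿ,c}(σ(x), σ(y)) = h_{ℍⁿ,c}(x, y). -/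
noncomputable section

open Real Filter

theorem hH_invariant_under_unit_sphere_inversion (n : ℕ) (hn : 1 ≤ n)
    (x y : EuclideanSpace ℝ (Fin n))
    (hx : 0 < lastCoord x) (hy : 0 < lastCoord y)
    (c : ℝ) (hc : 0 < c) :
    hH c ((‖x‖ ^ 2)⁻¹ • x) ((‖y‖ ^ 2)⁻¹ • y) = hH c x y := by
  have hlast : ∀ (t : ℝ) (z : EuclideanSpace ℝ (Fin n)),
      lastCoord (t • z) = t * lastCoord z := by
    intro t z
    unfold lastCoord
    split_ifs <;> simp
  have hne : ∀ z : EuclideanSpace ℝ (Fin n), 0 < lastCoord z → z ≠ 0 := by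
    rintro z hz rfl
    have h0 := hlast 0 0
    simp only [zero_smul, zero_mul] at h0
    exact hz.ne' h0
  have hx0 := hne x hx
  have hy0 := hne y hy
  have hxn : 0 < ‖x‖ := norm_pos_iff.2 hx0
  have hyn : 0 < ‖y‖ := norm_pos_iff.2 hy0
  have hd := dist_div_norm_sq_smul hx0 hy0 1
  simp only [one_div, inv_pow, one_pow, dist_eq_norm] at hd
  have hs : Real.sqrt ((‖x‖ ^ 2)⁻¹ * lastCoord x * ((‖y‖ ^ 2)⁻¹ * lastCoord y))
      = (‖x‖ * ‖y‖)⁻¹ * Real.sqrt (lastCoord x * lastCoord y) := by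
    rw [show (‖x‖ ^ 2)⁻¹ * lastCoord x * ((‖y‖ ^ 2)⁻¹ * lastCoord y)
      = ((‖x‖ * ‖y‖)⁻¹) ^ 2 * (lastCoord x * lastCoord y) by
        rw [mul_inv, mul_pow, inv_pow, inv_pow]; ring]
    rw [Real.sqrt_mul (sq_nonneg _), Real.sqrt_sq (by positivity)]
  have hp : 0 < Real.sqrt (lastCoord x * lastCoord y) := Real.sqrt_pos.2 (mul_pos hx hy)
  unfold hH
  rw [hlast, hlast, hs, hd]
  congr 2
  field_simp
end
end

section
/- Let n ≥ 2, a ∈ 𝔹ⁿ \ {0}, c > 0, and let σ_a be the inversion in the sphere S^{n−1}(a*, r). Then for all x, y ∈ 𝔹ⁿ: h_{𝔹ⁿ,c}(σ_a(x), σ_a(y)) ≤ log(1 + c·(1 + |a|)·|x − y|/√((1 − |x|)(1 − |y|))). -/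
noncomputable section

open Real Filter

section helpers
variable {E : Type*} [NormedAddCommGroup E] [InnerProductSpace ℝ E]

lemma aux_dist_s15 (R : ℝ) (b u v : E) (hu : u ≠ 0) (hv : v ≠ 0) :
    ‖(b + (R / ‖u‖ ^ 2) • u) - (b + (R / ‖v‖ ^ 2) • v)‖ ^ 2
      = (R / ‖u‖ ^ 2) * (R / ‖v‖ ^ 2) * ‖u - v‖ ^ 2 := by
  have hu' : ‖u‖ ≠ 0 := norm_ne_zero_iff.2 hu
  have hv' : ‖v‖ ≠ 0 := norm_ne_zero_iff.2 hv
  rw [add_sub_add_left_eq_sub, norm_sub_sq_real, norm_sub_sq_real, norm_smul, norm_smul,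
    real_inner_smul_left, real_inner_smul_right, mul_pow, mul_pow, Real.norm_eq_abs,
    Real.norm_eq_abs, sq_abs, sq_abs]
  field_simp
  ring

lemma aux_norm_s15 (A : ℝ) (hA : 0 < A) (b x : E) (hb : A * ‖b‖ = 1) (hu : x - b ≠ 0) :
    1 - ‖b + (((A ^ 2)⁻¹ - 1) / ‖x - b‖ ^ 2) • (x - b)‖ ^ 2
      = (((A ^ 2)⁻¹ - 1) / ‖x - b‖ ^ 2) * (1 - ‖x‖ ^ 2) := by
  have hu' : ‖x - b‖ ≠ 0 := norm_ne_zero_iff.2 hu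
  have hX : ‖x‖ ^ 2 = ‖b‖ ^ 2 + 2 * inner ℝ b (x - b) + ‖x - b‖ ^ 2 := by
    rw [← norm_add_sq_real]; simp
  have hb' : ‖b‖ = A⁻¹ := eq_inv_of_mul_eq_one_right hb
  rw [hX, norm_add_sq_real, norm_smul, real_inner_smul_right, mul_pow, Real.norm_eq_abs,
    sq_abs, hb']
  field_simp
  ring

lemma aux_pt (A : ℝ) (hA : 0 < A) (hA1 : A < 1) (b x : E) (hb : A * ‖b‖ = 1) (hx : ‖x‖ < 1) :
    x - b ≠ 0 ∧ 0 ≤ ((A ^ 2)⁻¹ - 1) / ‖x - b‖ ^ 2 ∧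
    0 < 1 - ‖b + (((A ^ 2)⁻¹ - 1) / ‖x - b‖ ^ 2) • (x - b)‖ ∧
    (((A ^ 2)⁻¹ - 1) / ‖x - b‖ ^ 2) * (1 - ‖x‖) ≤
      (1 + A) * (1 - ‖b + (((A ^ 2)⁻¹ - 1) / ‖x - b‖ ^ 2) • (x - b)‖) := by
  have hu : x - b ≠ 0 := by
    intro h
    rw [sub_eq_zero] at h
    subst h
    nlinarith [norm_nonneg x]
  have hN := aux_norm_s15 A hA b x hb hu
  have hU : 0 < ‖x - b‖ := norm_pos_iff.2 hu
  have hD : A * ‖x - b‖ ≤ 1 + A * ‖x‖ := by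
    have := mul_le_mul_of_nonneg_left (norm_sub_le x b) hA.le
    linarith
  have hX := norm_nonneg x
  have hkU : (((A ^ 2)⁻¹ - 1) / ‖x - b‖ ^ 2) * (A * ‖x - b‖) ^ 2 = 1 - A ^ 2 := by
    field_simp
  have hDp : 0 < A * ‖x - b‖ := by positivity
  generalize hk : ((A ^ 2)⁻¹ - 1) / ‖x - b‖ ^ 2 = k at *
  have hs := norm_nonneg (b + k • (x - b))
  generalize ‖b + k • (x - b)‖ = s at *
  generalize A * ‖x - b‖ = D at *
  generalize ‖x‖ = X at *
  have hkp : 0 < k := by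
    by_contra h
    nlinarith [sq_nonneg D]
  have hX2 : 0 < 1 - X ^ 2 := by nlinarith
  have hs1 : s < 1 := by
    have := mul_pos hkp hX2
    nlinarith
  have hD2 : D ^ 2 ≤ (1 + A * X) ^ 2 := by gcongr
  have hk2 : 1 - A ^ 2 ≤ k * (1 + A * X) ^ 2 := by
    rw [← hkU]; gcongr
  have hsq : (s * (1 + A * X)) ^ 2 ≤ (A + X) ^ 2 := by
    have h1 := mul_le_mul_of_nonneg_right hk2 hX2.le
    have h2 : (s * (1 + A * X)) ^ 2 = (1 + A * X) ^ 2 - k * (1 - X ^ 2) * (1 + A * X) ^ 2 := by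
      rw [← hN]; ring
    nlinarith
  have h3 : s * (1 + A * X) ≤ A + X := abs_le_of_sq_le_sq' hsq (by positivity) |>.2
  have h4 : s ≤ A + X := by nlinarith [mul_nonneg hs (mul_nonneg hA.le hX)]
  have h5 : 1 + s ≤ (1 + A) * (1 + X) := by nlinarith [mul_nonneg hA.le hX]
  refine ⟨hu, hkp.le, by linarith, ?_⟩
  have h6 := mul_le_mul_of_nonneg_left h5 (by linarith : 0 ≤ 1 - s)
  have h7 : (k * (1 - X)) * (1 + X) ≤ ((1 + A) * (1 - s)) * (1 + X) := by nlinarith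
  exact le_of_mul_le_mul_right h7 (by linarith)

end helpers

theorem hB_sigmaInv_upper_bound (n : ℕ) (hn : 2 ≤ n)
    (a : EuclideanSpace ℝ (Fin n)) (haB : ‖a‖ < 1) (ha0 : a ≠ 0)
    (c : ℝ) (hc : 0 < c)
    (x y : EuclideanSpace ℝ (Fin n)) (hx : ‖x‖ < 1) (hy : ‖y‖ < 1) :
    hB c (sigmaInv a x) (sigmaInv a y) ≤
      Real.log (1 + c * (1 + ‖a‖) * ‖x - y‖ / Real.sqrt ((1 - ‖x‖) * (1 - ‖y‖))) := by
  have hA : 0 < ‖a‖ := norm_pos_iff.2 ha0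
  have hb : ‖a‖ * ‖(‖a‖ ^ 2)⁻¹ • a‖ = 1 := by
    rw [norm_smul, norm_inv, norm_pow, norm_norm]
    field_simp
  obtain ⟨hu, hk, hs, hks⟩ := aux_pt ‖a‖ hA haB _ x hb hx
  obtain ⟨hv, hl, ht, hlt⟩ := aux_pt ‖a‖ hA haB _ y hb hy
  have hd := aux_dist_s15 ((‖a‖ ^ 2)⁻¹ - 1) ((‖a‖ ^ 2)⁻¹ • a) _ _ hu hv
  rw [sub_sub_sub_cancel_right] at hd
  have hx1 : 0 < 1 - ‖x‖ := by linarith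
  have hy1 : 0 < 1 - ‖y‖ := by linarith
  unfold hB sigmaInv
  generalize ((‖a‖ ^ 2)⁻¹ - 1) / ‖x - (‖a‖ ^ 2)⁻¹ • a‖ ^ 2 = k at *
  generalize ((‖a‖ ^ 2)⁻¹ - 1) / ‖y - (‖a‖ ^ 2)⁻¹ • a‖ ^ 2 = l at *
  generalize (‖a‖ ^ 2)⁻¹ • a + k • (x - (‖a‖ ^ 2)⁻¹ • a) = p at *
  generalize (‖a‖ ^ 2)⁻¹ • a + l • (y - (‖a‖ ^ 2)⁻¹ • a) = q at *
  have hS : 0 < (1 - ‖p‖) * (1 - ‖q‖) := mul_pos hs ht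
  have hT : 0 < (1 - ‖x‖) * (1 - ‖y‖) := mul_pos hx1 hy1
  have key : ‖p - q‖ * √((1 - ‖x‖) * (1 - ‖y‖)) ≤
      (1 + ‖a‖) * ‖x - y‖ * √((1 - ‖p‖) * (1 - ‖q‖)) := by
    refine abs_le_of_sq_le_sq' ?_ (by positivity) |>.2
    rw [mul_pow, mul_pow, mul_pow, Real.sq_sqrt hS.le, Real.sq_sqrt hT.le, hd]
    have h := mul_le_mul hks hlt (by positivity) (by positivity)
    have h2 := mul_le_mul_of_nonneg_right h (sq_nonneg ‖x - y‖)
    calc _ = k * (1 - ‖x‖) * (l * (1 - ‖y‖)) * ‖x - y‖ ^ 2 := by ring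
      _ ≤ _ := h2
      _ = _ := by ring
  apply Real.log_le_log
  · positivity
  · gcongr 1 + ?_
    rw [div_le_div_iff₀ (Real.sqrt_pos.2 hS) (Real.sqrt_pos.2 hT)]
    have := mul_le_mul_of_nonneg_left key hc.le
    linarith
end
end

section
/- Let n ≥ 2, a ∈ 𝔹ⁿ \ {0}, c > 0, and let σ_a be the inversion in the sphere S^{n−1}(a*, r). Then for all x, y ∈ 𝔹ⁿ \ {0} with |y| ≤ |x|: log(1 + c·|σ_a(x) − σ_a(y)| / √(|σ_a(x) − a|·(1 − |σ_a(y)|))) ≤ √(2(1 + |a|)/(2 − |a|)) · h_{𝔹ⁿ\{0},c}(x, y). -/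
noncomputable section

open Real Filter

/-- `σ_a` as Mathlib's inversion. -/
lemma sigmaInv_eq_inversion {n : ℕ} (a x : EuclideanSpace ℝ (Fin n)) (haB : ‖a‖ < 1)
    (ha : 0 < ‖a‖) :
    sigmaInv a x =
      EuclideanGeometry.inversion ((‖a‖ ^ 2)⁻¹ • a) (Real.sqrt ((‖a‖ ^ 2)⁻¹ - 1)) x := by
  have h1 : 0 ≤ (‖a‖ ^ 2)⁻¹ - 1 := by
    have : 1 ≤ (‖a‖ ^ 2)⁻¹ := by
      rw [one_le_inv₀ (by positivity)]; nlinarith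
    linarith
  unfold sigmaInv EuclideanGeometry.inversion
  rw [div_pow, Real.sq_sqrt h1, dist_eq_norm, vsub_eq_sub, vadd_eq_add, add_comm]

lemma norm_astar {n : ℕ} (a : EuclideanSpace ℝ (Fin n)) (ha : 0 < ‖a‖) :
    ‖(‖a‖ ^ 2)⁻¹ • a‖ = ‖a‖⁻¹ := by
  rw [norm_smul, norm_inv, norm_pow, norm_norm]; field_simp

lemma D_lower {n : ℕ} (a x : EuclideanSpace ℝ (Fin n)) (ha : 0 < ‖a‖) :
    1 - ‖a‖ * ‖x‖ ≤ ‖a‖ * ‖x - (‖a‖ ^ 2)⁻¹ • a‖ := by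
  have h := norm_sub_norm_le ((‖a‖ ^ 2)⁻¹ • a) x
  rw [norm_astar a ha, norm_sub_rev] at h
  have := mul_le_mul_of_nonneg_left h ha.le
  rw [mul_sub, mul_inv_cancel₀ ha.ne'] at this
  exact this

lemma D_upper {n : ℕ} (a x : EuclideanSpace ℝ (Fin n)) (ha : 0 < ‖a‖) :
    ‖a‖ * ‖x - (‖a‖ ^ 2)⁻¹ • a‖ ≤ 1 + ‖a‖ * ‖x‖ := by
  have h := norm_sub_le x ((‖a‖ ^ 2)⁻¹ • a)
  rw [norm_astar a ha] at h
  have := mul_le_mul_of_nonneg_left h ha.le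
  rw [mul_add, mul_inv_cancel₀ ha.ne'] at this
  linarith

lemma D_sq {n : ℕ} (a x : EuclideanSpace ℝ (Fin n)) (ha : 0 < ‖a‖) :
    (‖a‖ * ‖x - (‖a‖ ^ 2)⁻¹ • a‖) ^ 2 =
      ‖x - a‖ ^ 2 + (1 - ‖a‖ ^ 2) * (1 - ‖x‖ ^ 2) := by
  rw [mul_pow, @norm_sub_sq_real, @norm_sub_sq_real, norm_astar a ha, inner_smul_right]
  field_simp
  ring

lemma sigma_dist {n : ℕ} (a x y : EuclideanSpace ℝ (Fin n)) (haB : ‖a‖ < 1)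
    (ha : 0 < ‖a‖) (hx : ‖x‖ < 1) (hy : ‖y‖ < 1) :
    ‖sigmaInv a x - sigmaInv a y‖ = (1 - ‖a‖ ^ 2) * ‖x - y‖ /
      ((‖a‖ * ‖x - (‖a‖ ^ 2)⁻¹ • a‖) * (‖a‖ * ‖y - (‖a‖ ^ 2)⁻¹ • a‖)) := by
  have h1 : 0 ≤ (‖a‖ ^ 2)⁻¹ - 1 := by
    have : 1 ≤ (‖a‖ ^ 2)⁻¹ := by
      rw [one_le_inv₀ (by positivity)]; nlinarith
    linarith
  have key : ∀ z : EuclideanSpace ℝ (Fin n), ‖z‖ < 1 → 0 < ‖z - (‖a‖ ^ 2)⁻¹ • a‖ := by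
    intro z hz
    have := D_lower a z ha
    by_contra hcon
    have : ‖a‖ * ‖z - (‖a‖ ^ 2)⁻¹ • a‖ ≤ 0 :=
      mul_nonpos_of_nonneg_of_nonpos ha.le (not_lt.mp hcon)
    nlinarith [norm_nonneg z]
  have hxp := key x hx
  have hyp := key y hy
  rw [sigmaInv_eq_inversion a x haB ha, sigmaInv_eq_inversion a y haB ha, ← dist_eq_norm,
    EuclideanGeometry.dist_inversion_inversion (sub_ne_zero.mp (norm_pos_iff.mp hxp))
      (sub_ne_zero.mp (norm_pos_iff.mp hyp)), Real.sq_sqrt h1, dist_eq_norm, dist_eq_norm,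
      dist_eq_norm]
  field_simp

lemma sigma_zero {n : ℕ} (a : EuclideanSpace ℝ (Fin n)) (ha : 0 < ‖a‖) :
    sigmaInv a 0 = a := by
  unfold sigmaInv
  rw [zero_sub, norm_neg, norm_astar a ha, smul_neg, smul_smul, ← sub_eq_add_neg, ← sub_smul]
  convert one_smul ℝ a
  field_simp
  ring

lemma sigma_self {n : ℕ} (a : EuclideanSpace ℝ (Fin n)) (haB : ‖a‖ < 1) (ha : 0 < ‖a‖) :
    sigmaInv a a = 0 := by
  unfold sigmaInv
  have h : a - (‖a‖ ^ 2)⁻¹ • a = (1 - (‖a‖ ^ 2)⁻¹) • a := by rw [sub_smul, one_smul]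
  have h2 : (1 - ‖a‖ ^ 2) ≠ 0 := by nlinarith
  have h3 : (1 - (‖a‖ ^ 2)⁻¹) ≠ 0 := by
    intro h0
    apply h2
    field_simp at h0
    linarith
  rw [h, norm_smul, smul_smul, ← add_smul, mul_pow, Real.norm_eq_abs, sq_abs]
  convert zero_smul ℝ a
  have : (‖a‖ ^ 2)⁻¹ - 1 = -(1 - (‖a‖ ^ 2)⁻¹) := by ring
  rw [this]
  generalize 1 - (‖a‖ ^ 2)⁻¹ = w at h3
  field_simp
  ring

lemma real_core {A X Y Dx Dy S : ℝ} (hA : 0 < A) (hA1 : A < 1) (hX : 0 < X) (hX1 : X < 1)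
    (hY : 0 < Y) (hY1 : Y < 1) (hDx : 1 - A * X ≤ Dx)
    (hDyp : 0 < Dy) (hDy2 : Dy ≤ 1 + A * Y) (hS : 0 ≤ S)
    (hSD : (1 - S ^ 2) * Dy ^ 2 = (1 - A ^ 2) * (1 - Y ^ 2)) :
    (1 - A ^ 2) * (min X (1 - X) * min Y (1 - Y)) ≤
      (2 * (1 + A) / (2 - A)) * (X * (1 - S)) * (Dx * Dy ^ 2) := by
  have hAY : 0 < A * Y := by positivity
  have hA2 : 0 < 1 - A ^ 2 := by nlinarith
  have hY2 : 0 < 1 - Y ^ 2 := by nlinarith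
  -- bound on S
  have h1 : (S * (1 + A * Y)) ≤ A + Y := by
    have hS1 : 0 ≤ 1 - S ^ 2 := by
      by_contra hcon
      have := mul_pos hA2 hY2
      have h3 : (1 - S ^ 2) * Dy ^ 2 ≤ 0 :=
        mul_nonpos_of_nonpos_of_nonneg (not_le.mp hcon).le (by positivity)
      linarith
    have h2 : Dy ^ 2 ≤ (1 + A * Y) ^ 2 := by gcongr
    have h3 := mul_le_mul_of_nonneg_left h2 hS1
    apply le_of_sq_le_sq _ (by positivity)
    nlinarith
  have h2 : (1 + S) * 1 ≤ (1 + A) * (1 + Y) := by nlinarith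
  have hmy : min Y (1 - Y) ≤ 1 - Y := min_le_right _ _
  have hmy0 : 0 ≤ min Y (1 - Y) := le_min hY.le (by linarith)
  have hAX : 0 < 1 - A * X := by nlinarith
  have hmx : min X (1 - X) ≤ 2 / (2 - A) * (X * Dx) := by
    have : min X (1 - X) * (2 - A) ≤ 2 * (X * (1 - A * X)) := by
      rcases le_total X (1 / 2) with h | h
      · calc _ ≤ X * (2 - A) := by gcongr; linarith; exact min_le_left _ _
          _ ≤ _ := by nlinarith [mul_nonneg hX.le (mul_nonneg hA.le (sub_nonneg.2 h))]
      · calc _ ≤ (1 - X) * (2 - A) := by gcongr; linarith; exact min_le_right _ _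
          _ ≤ _ := by
            have : 0 ≤ (2 * X - 1) * (2 - A * (X + 1)) :=
              mul_nonneg (by linarith) (by nlinarith)
            nlinarith
    rw [div_mul_eq_mul_div, le_div_iff₀ (by linarith)]
    refine this.trans ?_
    gcongr
  have hmx0 : 0 ≤ min X (1 - X) := le_min hX.le (by linarith)
  have hK : 0 ≤ 2 / (2 - A) * (X * Dx) := hmx0.trans hmx
  have h3 : min X (1 - X) * min Y (1 - Y) * (1 + S) ≤
      2 / (2 - A) * (X * Dx) * (1 - Y) * ((1 + A) * (1 + Y)) := by
    have : 0 ≤ 1 - Y := by linarith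
    gcongr
    linarith
  refine le_of_mul_le_mul_right (?_ : _ * (1 + S) ≤ _ * (1 + S)) (by linarith)
  calc _ = (1 - A ^ 2) * (min X (1 - X) * min Y (1 - Y) * (1 + S)) := by ring
    _ ≤ (1 - A ^ 2) * (2 / (2 - A) * (X * Dx) * (1 - Y) * ((1 + A) * (1 + Y))) := by gcongr
    _ = 2 / (2 - A) * (1 + A) * (X * Dx) * ((1 - A ^ 2) * (1 - Y ^ 2)) := by ring
    _ = _ := by rw [← hSD]; ring

set_option maxHeartbeats 1000000 in
theorem punctured_case_two_bound (n : ℕ) (hn : 2 ≤ n)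
    (a : EuclideanSpace ℝ (Fin n)) (haB : ‖a‖ < 1) (ha0 : a ≠ 0)
    (c : ℝ) (hc : 0 < c)
    (x y : EuclideanSpace ℝ (Fin n))
    (hx : ‖x‖ < 1) (hx0 : x ≠ 0) (hy : ‖y‖ < 1) (hy0 : y ≠ 0)
    (hyx : ‖y‖ ≤ ‖x‖) :
    Real.log (1 + c * ‖sigmaInv a x - sigmaInv a y‖ /
        Real.sqrt (‖sigmaInv a x - a‖ * (1 - ‖sigmaInv a y‖))) ≤
      Real.sqrt (2 * (1 + ‖a‖) / (2 - ‖a‖)) * hP c 0 x y := by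
  have ha : 0 < ‖a‖ := norm_pos_iff.mpr ha0
  have hX : 0 < ‖x‖ := norm_pos_iff.mpr hx0
  have hY : 0 < ‖y‖ := norm_pos_iff.mpr hy0
  have h0 : ‖(0 : EuclideanSpace ℝ (Fin n))‖ < 1 := by simp
  have hN := sigma_dist a x y haB ha hx hy
  have hP := sigma_dist a x 0 haB ha hx h0
  have hSS := sigma_dist a y a haB ha hy haB
  have hDsq := D_sq a y ha
  have hDaa := D_sq a a ha
  have hDx := D_lower a x ha
  have hDyl := D_lower a y ha
  have hDy2 := D_upper a y ha
  rw [sigma_zero a ha, zero_sub, norm_neg, norm_astar a ha, mul_inv_cancel₀ ha.ne', sub_zero,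
    mul_one] at hP
  rw [sigma_self a haB ha, sub_zero] at hSS
  have hA2 : 0 < 1 - ‖a‖ ^ 2 := by nlinarith
  have hDa : ‖a‖ * ‖a - (‖a‖ ^ 2)⁻¹ • a‖ = 1 - ‖a‖ ^ 2 := by
    rw [sub_self, norm_zero] at hDaa
    apply (sq_eq_sq₀ (by positivity) hA2.le).mp
    rw [hDaa]; ring
  rw [hDa] at hSS
  rw [hN, hP]
  have hDxp : 0 < ‖a‖ * ‖x - (‖a‖ ^ 2)⁻¹ • a‖ := by nlinarith
  have hDyp : 0 < ‖a‖ * ‖y - (‖a‖ ^ 2)⁻¹ • a‖ := by nlinarith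
  unfold _root_.hP
  rw [sub_zero, sub_zero]
  generalize ‖a‖ * ‖x - (‖a‖ ^ 2)⁻¹ • a‖ = Dx at *
  generalize ‖a‖ * ‖y - (‖a‖ ^ 2)⁻¹ • a‖ = Dy at *
  have hS0 : 0 ≤ ‖sigmaInv a y‖ := norm_nonneg _
  generalize ‖sigmaInv a y‖ = S at *
  have hSD : (1 - S ^ 2) * Dy ^ 2 = (1 - ‖a‖ ^ 2) * (1 - ‖y‖ ^ 2) := by
    have : S * Dy = ‖y - a‖ := by rw [hSS]; field_simp
    rw [sub_mul, ← mul_pow, this, hDsq]; ring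
  have core := real_core ha haB hX hx hY hy hDx hDyp hDy2 hS0 hSD
  have hmx : 0 < min ‖x‖ (1 - ‖x‖) := lt_min hX (by linarith)
  have hmy : 0 < min ‖y‖ (1 - ‖y‖) := lt_min hY (by linarith)
  have hm := mul_pos hmx hmy
  generalize min ‖x‖ (1 - ‖x‖) * min ‖y‖ (1 - ‖y‖) = m at *
  have hS1 : 0 < 1 - S := by
    have hY2 : 0 < 1 - ‖y‖ ^ 2 := by nlinarith
    have h3 : 0 < (1 - S ^ 2) * Dy ^ 2 := by rw [hSD]; positivity
    have h4 : 0 < 1 - S ^ 2 := pos_of_mul_pos_left h3 (by positivity)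
    nlinarith
  have hK1 : 1 ≤ 2 * (1 + ‖a‖) / (2 - ‖a‖) := by
    rw [le_div_iff₀ (by linarith)]; linarith
  generalize 2 * (1 + ‖a‖) / (2 - ‖a‖) = K at *
  have hsK : 1 ≤ Real.sqrt K := Real.one_le_sqrt.mpr hK1
  have hu : 0 ≤ c * ‖x - y‖ / Real.sqrt m := by positivity
  have hb := one_add_mul_self_le_rpow_one_add (s := c * ‖x - y‖ / Real.sqrt m)
    (by linarith) hsK
  rw [← Real.log_rpow (by positivity)]
  apply Real.log_le_log
  · positivity
  refine le_trans ?_ hb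
  gcongr 1 + ?_
  have hfin : (1 - ‖a‖ ^ 2) / (Dx * Dy) * Real.sqrt m ≤
      Real.sqrt K * Real.sqrt ((1 - ‖a‖ ^ 2) * ‖x‖ / Dx * (1 - S)) := by
    rw [← Real.sqrt_mul (by linarith)]
    apply Real.le_sqrt_of_sq_le
    rw [mul_pow, Real.sq_sqrt hm.le]
    have e1 : ((1 - ‖a‖ ^ 2) / (Dx * Dy)) ^ 2 * m =
      (1 - ‖a‖ ^ 2) / (Dx * Dy) ^ 2 * ((1 - ‖a‖ ^ 2) * m) := by ring
    have e2 : K * ((1 - ‖a‖ ^ 2) * ‖x‖ / Dx * (1 - S)) =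
      (1 - ‖a‖ ^ 2) / (Dx * Dy) ^ 2 * (K * (‖x‖ * (1 - S)) * (Dx * Dy ^ 2)) := by
      field_simp
    rw [e1, e2]
    exact mul_le_mul_of_nonneg_left core (div_nonneg hA2.le (sq_nonneg _))
  have hq : 0 < Real.sqrt ((1 - ‖a‖ ^ 2) * ‖x‖ / Dx * (1 - S)) :=
    Real.sqrt_pos.mpr (by positivity)
  have hsm : 0 < Real.sqrt m := Real.sqrt_pos.mpr hm
  rw [← mul_div_assoc (Real.sqrt K), div_le_div_iff₀ hq hsm]
  have hcn : 0 ≤ c * ‖x - y‖ := by positivity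
  have := mul_le_mul_of_nonneg_left hfin hcn
  calc _ = c * ‖x - y‖ * ((1 - ‖a‖ ^ 2) / (Dx * Dy) * Real.sqrt m) := by ring
    _ ≤ _ := this
    _ = _ := by ring
end
end
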